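/- arXiv:1808.09627 — 2 statements merged into one kernel-verified Lean document; each statement's English description precedes it below -/
import Mathlib

section
/- Let n, k be natural numbers with k + 1 ≤ n, and let φ₁, …, φ_k : ℝⁿ → ℝ be C^∞ functions. Then for every strictly increasing map m : Fin (k+1) → Fin n and every point z ∈ ℝⁿ, the alternating sum over p ∈ Fin (k+1) of (−1)^p times the partial derivative in the direction e_{m(p)} of the Jacobian minor det(∂φ_i/∂z_{m(succAbove p q)})_{i,q ∈ Fin k} vanishes: ∑_{p=0}^{k} (−1)^p ∂_{m(p)} [ det( ∂φ_i/∂z_{m(p.succAbove q)} ) ] (z) = 0. (This is the coefficient form of the paper's Basic Calculus Lemma: the (k+1)-form ∑_{(s,J)} ∂_s(∂(φ₁,…,φ_k)/∂(z_{j₁},…,z_{j_k})) dz_s ∧ dz_{j₁} ∧ ⋯ ∧ dz_{j_k} is identically zero.) -/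
/-!
The alternating sum is the value at `(e_{m 0}, …, e_{m k})` of the exterior derivative of
`dφ₁ ∧ ⋯ ∧ dφ_k`, and this form is the pullback of the constant form `det` under
`Φ = (φ₁, …, φ_k)`. Since the exterior derivative commutes with pullback and vanishes on constant
forms, the sum is zero.
-/

open Matrix Topology

section Wedge

variable {ι R M : Type*} [Fintype ι] [DecidableEq ι] [CommRing R] [TopologicalSpace R]
  [IsTopologicalRing R] [AddCommGroup M] [Module R M] [TopologicalSpace M]

variable (ι R) in
/-- The determinant form on `ι → R`, i.e. `Matrix.detRowAlternating` as a continuous alternating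
map; its arguments are the rows of the matrix. -/
def detForm : (ι → R) [⋀^ι]→L[R] R where
  __ := (detRowAlternating : (ι → R) [⋀^ι]→ₗ[R] R)
  cont := Continuous.matrix_det continuous_id

/-- The exterior product `ℓ₁ ∧ ⋯ ∧ ℓ_k` of a finite family of covectors, normalised without
factorials. It is encoded as the pullback of the determinant form under the linear map
`(ℓ₁, …, ℓ_k)`. -/
def wedge (ℓ : ι → M →L[R] R) : M [⋀^ι]→L[R] R :=
  (detForm ι R).compContinuousLinearMap (.pi ℓ)

lemma wedge_apply (ℓ : ι → M →L[R] R) (v : ι → M) :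
    wedge ℓ v = det (of fun i j => ℓ i (v j)) :=
  det_transpose (of fun i j => ℓ i (v j))

end Wedge

section ExteriorDerivative

variable {𝕜 E F G : Type*} [NontriviallyNormedField 𝕜]
  [NormedAddCommGroup E] [NormedSpace 𝕜 E] [NormedAddCommGroup F] [NormedSpace 𝕜 F]
  [NormedAddCommGroup G] [NormedSpace 𝕜 G]

lemma extDeriv_const {k : ℕ} (ω : E [⋀^Fin k]→L[𝕜] F) (x : E) :
    extDeriv (fun _ => ω) x = 0 := by
  ext v
  simp [extDeriv, ContinuousAlternatingMap.alternatizeUncurryFin_apply]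

lemma extDeriv_pullback_const {k : ℕ} {r : WithTop ℕ∞} {f : E → F} {x : E}
    (ω : F [⋀^Fin k]→L[𝕜] G) (hf : ContDiffAt 𝕜 r f x) (hr : minSmoothness 𝕜 2 ≤ r) :
    extDeriv (fun y => ω.compContinuousLinearMap (fderiv 𝕜 f y)) x = 0 := by
  rw [extDeriv_pullback (ω := fun _ => ω) (differentiableAt_const _) hf hr, extDeriv_const]
  rfl

section Wedge

variable {ι : Type*} [Fintype ι] [DecidableEq ι]

lemma differentiableAt_wedge {ω : E → ι → F →L[𝕜] 𝕜} {x : E}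
    (hω : ∀ i, DifferentiableAt 𝕜 (fun y => ω y i) x) :
    DifferentiableAt 𝕜 (fun y => wedge (ω y)) x := by
  have hpi : DifferentiableAt 𝕜 (fun y => ContinuousLinearMap.pi (ω y)) x :=
    (ContinuousLinearMap.piEquivL 𝕜 F fun _ : ι => 𝕜).differentiableAt.comp x
      (differentiableAt_pi.2 hω)
  exact (differentiableAt_const _).continuousAlternatingMapCompContinuousLinearMap hpi

lemma wedge_fderiv_eq_pullback {φ : ι → E → 𝕜} {x : E} (hφ : ∀ i, DifferentiableAt 𝕜 (φ i) x) :
    (wedge fun i => fderiv 𝕜 (φ i) x) =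
      (detForm ι 𝕜).compContinuousLinearMap (fderiv 𝕜 (fun y i => φ i y) x) := by
  rw [fderiv_pi hφ, wedge]

end Wedge

variable {k : ℕ} {r : WithTop ℕ∞} {φ : Fin k → E → 𝕜} {z : E}

lemma extDeriv_wedge_fderiv (hφ : ∀ i, ContDiffAt 𝕜 r (φ i) z) (hr : minSmoothness 𝕜 2 ≤ r) :
    extDeriv (fun x => wedge fun i => fderiv 𝕜 (φ i) x) z = 0 := by
  have hdiff (i : Fin k) : ∀ᶠ x in 𝓝 z, DifferentiableAt 𝕜 (φ i) x :=
    (((hφ i).of_le (le_minSmoothness.trans hr)).eventually (by simp)).mono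
      fun _ hx => hx.differentiableAt two_ne_zero
  have hpullback : (fun x => wedge fun i => fderiv 𝕜 (φ i) x) =ᶠ[𝓝 z]
      fun x => (detForm (Fin k) 𝕜).compContinuousLinearMap (fderiv 𝕜 (fun y i => φ i y) x) :=
    (Filter.eventually_all.2 hdiff).mono fun _ hx => wedge_fderiv_eq_pullback hx
  rw [hpullback.extDeriv_eq]
  exact extDeriv_pullback_const _ (contDiffAt_pi.2 hφ) hr

theorem basic_calculus_lemma_coefficients_general (hφ : ∀ i, ContDiffAt 𝕜 r (φ i) z)
    (hr : minSmoothness 𝕜 2 ≤ r) (v : Fin (k + 1) → E) :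
    ∑ p : Fin (k + 1), (-1 : 𝕜) ^ (p : ℕ) *
      fderiv 𝕜 (fun x => det (of fun i q : Fin k => fderiv 𝕜 (φ i) x (v (p.succAbove q))))
        z (v p) = 0 := by
  have hdiff : DifferentiableAt 𝕜 (fun x => wedge fun i => fderiv 𝕜 (φ i) x) z :=
    differentiableAt_wedge fun i =>
      ((hφ i).fderiv_right (le_minSmoothness.trans hr)).differentiableAt one_ne_zero
  have hsum := extDeriv_apply hdiff v
  rw [extDeriv_wedge_fderiv hφ hr] at hsum
  simpa [wedge_apply, Fin.removeNth] using hsum.symm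

end ExteriorDerivative

/-- **Basic Calculus Lemma (coefficient form).**
For `C^∞` functions `φ₁, …, φ_k : ℝⁿ → ℝ` and any strictly increasing
`m : Fin (k+1) → Fin n`, the alternating sum over `p` of `(-1)^p` times the
partial derivative in direction `e_{m p}` of the Jacobian minor
`det (∂φ_i/∂z_{m (p.succAbove q)})` vanishes at every point `z`. -/
theorem basic_calculus_lemma_coefficients
    (n k : ℕ) (hk : k + 1 ≤ n)
    (φ : Fin k → (Fin n → ℝ) → ℝ) (hφ : ∀ i, ContDiff ℝ (⊤ : ℕ∞) (φ i))
    (m : Fin (k + 1) → Fin n) (hm : StrictMono m) (z : Fin n → ℝ) :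
    ∑ p : Fin (k + 1), (-1 : ℝ) ^ (p : ℕ) *
      fderiv ℝ
        (fun x => Matrix.det
          (Matrix.of fun i q : Fin k =>
            fderiv ℝ (φ i) x (Pi.single (m (p.succAbove q)) 1)))
        z (Pi.single (m p) 1) = 0 :=
  basic_calculus_lemma_coefficients_general (fun i => (hφ i).contDiffAt)
    (by simpa using WithTop.coe_le_coe.2 (le_top : (2 : ℕ∞) ≤ ⊤)) fun p => Pi.single (m p) 1
end

section
/- Let n, k be natural numbers, let U be an open subset of ℝⁿ, let F : ℝⁿ → ℝⁿ be C^∞ on U, and let ω : ℝⁿ → AlternatingMap ℝ ℝⁿ ℝ (Fin k) be C^∞ on a neighborhood of F(U). Define the pullback F*ω : ℝⁿ → AlternatingMap ℝ ℝⁿ ℝ (Fin k) by (F*ω)(x)(v₁, …, v_k) = ω(F x)((fderiv ℝ F x) v₁, …, (fderiv ℝ F x) v_k), and define the exterior derivative of a C^∞ form η by dη(x)(v₀,…,v_m) = ∑_{p} (−1)^p (fderiv ℝ η x (v_p))(v₀,…,v̂_p,…,v_m). Then for every x ∈ U and all v₀, …, v_k ∈ ℝⁿ, d(F*ω)(x)(v₀,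 …, v_k) = dω(F x)((fderiv ℝ F x) v₀, …, (fderiv ℝ F x) v_k); that is, d(F*ω) = F*(dω) on U. -/
/-!
In `d(F*ω)` the terms carrying second derivatives of `F` cancel, because the second derivative is
symmetric while `ω` is alternating; for bundled alternating forms this is `extDeriv_pullback`.
It transfers to alternating families `η` of multilinear maps since the derivative of `η` is again
alternating: if `v i = v j`, then `y ↦ η y v` vanishes identically, and so does its derivative.
-/

section MultilinearForms

open ContinuousAlternatingMap

variable {𝕜 E E' G X ι : Type*} [NontriviallyNormedField 𝕜]
  [NormedAddCommGroup E] [NormedSpace 𝕜 E] [NormedAddCommGroup E'] [NormedSpace 𝕜 E']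
  [NormedAddCommGroup G] [NormedSpace 𝕜 G] [NormedAddCommGroup X] [NormedSpace 𝕜 X] {k : ℕ}

lemma fderiv_toContinuousMultilinearMap_comp_apply_eq_zero_of_eq [Finite ι]
    {Ω : X → E [⋀^ι]→L[𝕜] G} {x : X}
    (hΩ : DifferentiableAt 𝕜 (toContinuousMultilinearMap ∘ Ω) x) (e : X) {w : ι → E} {i j : ι}
    (hw : w i = w j) (hij : i ≠ j) :
    fderiv 𝕜 (toContinuousMultilinearMap ∘ Ω) x e w = 0 := by
  cases nonempty_fintype ι
  have hzero : (fun y => (toContinuousMultilinearMap ∘ Ω) y w) = fun _ => 0 :=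
    funext fun y => (Ω y).map_eq_zero_of_eq w hw hij
  rw [← fderiv_continuousMultilinear_apply_const_apply hΩ, hzero, fderiv_fun_const]
  rfl

lemma differentiableAt_toContinuousMultilinearMap_comp_iff [Finite ι]
    {Ω : X → E [⋀^ι]→L[𝕜] G} {x : X} :
    DifferentiableAt 𝕜 (toContinuousMultilinearMap ∘ Ω) x ↔ DifferentiableAt 𝕜 Ω x := by
  cases nonempty_fintype ι
  refine ⟨fun h => ?_, fun h => (toContinuousMultilinearMapCLM 𝕜).differentiableAt.comp x h⟩
  let Ω' : X →L[𝕜] E [⋀^ι]→L[𝕜] G :=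
    { toFun e :=
        { fderiv 𝕜 (toContinuousMultilinearMap ∘ Ω) x e with
          map_eq_zero_of_eq' := fun _ _ _ =>
            fderiv_toContinuousMultilinearMap_comp_apply_eq_zero_of_eq h e }
      map_add' e₁ e₂ := toContinuousMultilinearMap_injective (map_add _ e₁ e₂)
      map_smul' c e := toContinuousMultilinearMap_injective (map_smul _ c e)
      cont := isEmbedding_toContinuousMultilinearMap.continuous_iff.2
        (fderiv 𝕜 (toContinuousMultilinearMap ∘ Ω) x).continuous }
  have hΩ' : HasFDerivAt (toContinuousMultilinearMap ∘ Ω)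
      (toContinuousMultilinearMapCLM 𝕜 ∘L Ω') x := h.hasFDerivAt
  have hcont : ContinuousAt Ω x :=
    isEmbedding_toContinuousMultilinearMap.continuousAt_iff.2 h.continuousAt
  exact (HasFDerivAt.of_comp_of_isEmbedding hcont
    (toContinuousMultilinearMapCLM 𝕜).hasFDerivAt isEmbedding_toContinuousMultilinearMap
    hΩ' .rfl).differentiableAt

/-- The exterior derivative of a form encoded as a family of continuous multilinear maps, evaluated
at `v`; it extends `extDeriv`, whose forms take values in bundled alternating maps. The omitted
argument `v p` is expressed by reindexing along `p.succAbove`. -/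
noncomputable def multilinearExtDeriv (η : E → E [×k]→L[𝕜] G) (x : E) (v : Fin (k + 1) → E) : G :=
  ∑ p, (-1) ^ p.val • fderiv 𝕜 η x (v p) fun q => v (p.succAbove q)

lemma multilinearExtDeriv_toContinuousMultilinearMap_comp {Ω : E → E [⋀^Fin k]→L[𝕜] G} {x : E}
    (hΩ : DifferentiableAt 𝕜 Ω x) (v : Fin (k + 1) → E) :
    multilinearExtDeriv (toContinuousMultilinearMap ∘ Ω) x v = extDeriv Ω x v := by
  rw [extDeriv_apply hΩ, multilinearExtDeriv]
  refine Finset.sum_congr rfl fun p _ => ?_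
  rw [← fderiv_continuousMultilinear_apply_const_apply
    (differentiableAt_toContinuousMultilinearMap_comp_iff.2 hΩ)]
  rfl

theorem exterior_derivative_commutes_with_pullback_general {f : E → E'} {x : E} {r : WithTop ℕ∞}
    (hf : ContDiffAt 𝕜 r f x) (hr : minSmoothness 𝕜 2 ≤ r) {ω : E' → E' [×k]→L[𝕜] G}
    (halt : ∀ (y : E') (w : Fin k → E') (i j : Fin k), i ≠ j → w i = w j → ω y w = 0)
    (hω : DifferentiableAt 𝕜 ω (f x)) {fω : E → E [×k]→L[𝕜] G}
    (hfω : ∀ (y : E) (w : Fin k → E), fω y w = ω (f y) fun q => fderiv 𝕜 f y (w q))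
    (v : Fin (k + 1) → E) :
    multilinearExtDeriv fω x v =
      multilinearExtDeriv ω (f x) fun p => fderiv 𝕜 f x (v p) := by
  obtain ⟨Ω, rfl⟩ : ∃ Ω : E' → E' [⋀^Fin k]→L[𝕜] G, toContinuousMultilinearMap ∘ Ω = ω :=
    ⟨fun y => { ω y with map_eq_zero_of_eq' := fun w i j hw hij => halt y w i j hij hw }, rfl⟩
  let fΩ : E → E [⋀^Fin k]→L[𝕜] G := fun y => (Ω (f y)).compContinuousLinearMap (fderiv 𝕜 f y)
  obtain rfl : fω = toContinuousMultilinearMap ∘ fΩ := funext fun y => by ext w; exact hfω y w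
  have h2r : 2 ≤ r := le_minSmoothness.trans hr
  have hdf : DifferentiableAt 𝕜 f x := hf.differentiableAt (two_pos.trans_le h2r).ne'
  have hd2f : DifferentiableAt 𝕜 (fderiv 𝕜 f) x :=
    (hf.fderiv_right h2r).differentiableAt one_ne_zero
  have hΩ : DifferentiableAt 𝕜 Ω (f x) :=
    differentiableAt_toContinuousMultilinearMap_comp_iff.1 hω
  have hfΩ : DifferentiableAt 𝕜 fΩ x :=
    (hΩ.comp x hdf).continuousAlternatingMapCompContinuousLinearMap hd2f
  calc multilinearExtDeriv (toContinuousMultilinearMap ∘ fΩ) x v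
    _ = extDeriv fΩ x v := multilinearExtDeriv_toContinuousMultilinearMap_comp hfΩ v
    _ = extDeriv Ω (f x) fun p => fderiv 𝕜 f x (v p) :=
      DFunLike.congr_fun (extDeriv_pullback hΩ hf hr) v
    _ = multilinearExtDeriv (toContinuousMultilinearMap ∘ Ω) (f x) fun p => fderiv 𝕜 f x (v p) :=
      (multilinearExtDeriv_toContinuousMultilinearMap_comp hΩ _).symm

end MultilinearForms

/-- **Naturality of the exterior derivative under smooth coordinate changes**
(the chart-level content of the paper's Theorem).  Let `U ⊆ ℝⁿ` be open, let
`F : ℝⁿ → ℝⁿ` be `C^∞` on `U`, and let `ω` be a `k`-form (an alternating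
`k`-multilinear-map-valued function) which is `C^∞` on an open neighborhood `V`
of `F '' U`.  If `F*ω` denotes the pullback,
`(F*ω) x (v₁,…,v_k) = ω (F x) (dF_x v₁, …, dF_x v_k)`, then for every `x ∈ U`
and all `v₀, …, v_k`,
`d(F*ω)(x)(v₀,…,v_k) = dω(F x)(dF_x v₀, …, dF_x v_k)`, where
`dη(x)(v₀,…,v_m) = ∑ p, (-1)^p (fderiv ℝ η x (v p))(v₀,…,v̂_p,…,v_m)`. -/
theorem exterior_derivative_commutes_with_pullback
    (n k : ℕ) (U : Set (Fin n → ℝ)) (hU : IsOpen U)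
    (F : (Fin n → ℝ) → (Fin n → ℝ)) (hF : ContDiffOn ℝ (⊤ : ℕ∞) F U)
    (ω : (Fin n → ℝ) → ((Fin n → ℝ) [×k]→L[ℝ] ℝ))
    (halt : ∀ (x : Fin n → ℝ) (v : Fin k → Fin n → ℝ) (i j : Fin k),
      i ≠ j → v i = v j → ω x v = 0)
    (V : Set (Fin n → ℝ)) (hV : IsOpen V) (hFUV : F '' U ⊆ V)
    (hω : ContDiffOn ℝ (⊤ : ℕ∞) ω V)
    (Fω : (Fin n → ℝ) → ((Fin n → ℝ) [×k]→L[ℝ] ℝ))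
    (hFω : ∀ (x : Fin n → ℝ) (v : Fin k → Fin n → ℝ),
      Fω x v = ω (F x) fun q => fderiv ℝ F x (v q))
    (x : Fin n → ℝ) (hx : x ∈ U) (v : Fin (k + 1) → Fin n → ℝ) :
    ∑ p : Fin (k + 1), (-1 : ℝ) ^ (p : ℕ) *
        fderiv ℝ Fω x (v p) (v ∘ p.succAbove) =
      ∑ p : Fin (k + 1), (-1 : ℝ) ^ (p : ℕ) *
        fderiv ℝ ω (F x) (fderiv ℝ F x (v p))
          (fun q => fderiv ℝ F x (v (p.succAbove q))) := by
  have hωFx := (hω.contDiffAt (hV.mem_nhds (hFUV ⟨x, hx, rfl⟩))).differentiableAt (by simp)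
  simpa [multilinearExtDeriv, Function.comp_def] using
    exterior_derivative_commutes_with_pullback_general (hF.contDiffAt (hU.mem_nhds hx))
      (minSmoothness_of_isRCLikeNormedField.trans_le (by norm_cast)) halt hωFx hFω v
end
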